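/- Let k > 2 be even, let k divide n with n/k > 2, let r ∈ (ℤ/nℤ)^×, and let X = {((j·n/k) + (−1)^j)·r : j = 0, 1, …, k−1} ⊆ ℤ/nℤ (these k elements are distinct). Then for every y ∈ ℤ/nℤ with integer representative ỹ: σ_X(y) = k·cos(2πr̃ỹ/n) if k divides ỹ; σ_X(y) = i·k·sin(2πr̃ỹ/n) if ỹ ≡ k/2 (mod k); and σ_X(y) = 0 otherwise, where r̃ is an integer representative of r. -/

import Mathlib

open Complex

/-- `e(θ) = exp(2πiθ)`. -/
noncomputable def e2 (θ : ℝ) : ℂ := Complex.exp (2 * Real.pi * Complex.I * θ)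

/-- The cyclic supercharacter attached to a subset `X` of `ℤ/nℤ`:
`σ_X(y) = Σ_{x ∈ X} e(xy/n)`. -/
noncomputable def superchar (n : ℕ) (X : Set (ZMod n)) (y : ZMod n) : ℂ :=
  ∑ᶠ x ∈ X, e2 (((x.val * y.val : ℕ) : ℝ) / (n : ℝ))

/-- The orbit `Ar = {ar : a ∈ A}` of `r` under a unit subgroup `A`. -/
def unitOrbit (n : ℕ) (A : Subgroup (ZMod n)ˣ) (r : ZMod n) : Set (ZMod n) :=
  (fun a : (ZMod n)ˣ => (a : ZMod n) * r) '' (A : Set (ZMod n)ˣ)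

/-!
Let `ζ = e(r/k)`, a primitive `k`-th root of unity since `r` is coprime to `k`, and `z = e(ry/n)`.
The `j`-th term of `σ_X(y)` is `ζ^(jy) z^((-1)^j)`, so pairing `j = 2i` with `j = 2i + 1` gives
`σ_X(y) = (z + ζ^y z⁻¹) ∑_{i < k/2} ζ^(2iy)`. The geometric sum vanishes unless `ζ^y = ±1`. If
`ζ^y = 1`, i.e. `k ∣ y`, the first factor is `z + z⁻¹`, a cosine; if `ζ^y = -1`, i.e.
`y ≡ k/2 (mod k)`, it is `z - z⁻¹`, a sine.
-/

/-- The geometric sum `∑_{j < k} wʲ z^{±1}` twisted by the alternating sign `±1 = (-1)ʲ`. It is the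
shape taken by the exponential sum over `{j·n/k + (-1)ʲ : j < k}`, with `w` a `k`-th root of
unity. -/
def alternatingGeomSum {K : Type*} [Field K] (w z : K) (k : ℕ) : K :=
  ∑ j ∈ Finset.range k, w ^ j * z ^ ((-1 : ℤ) ^ j)

section AlternatingGeomSum

variable {K : Type*} [Field K]

theorem alternatingGeomSum_two_mul (w z : K) (m : ℕ) :
    alternatingGeomSum w z (2 * m) = (z + w * z⁻¹) * ∑ i ∈ Finset.range m, (w ^ 2) ^ i := by
  induction m with
  | zero => simp [alternatingGeomSum]
  | succ m ih =>
    rw [alternatingGeomSum] at ih ⊢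
    rw [mul_add_one, Finset.sum_range_succ, Finset.sum_range_succ, ih, Finset.sum_range_succ,
      (even_two_mul m).neg_one_pow, (odd_two_mul_add_one m).neg_one_pow, zpow_one, zpow_neg_one]
    ring

theorem alternatingGeomSum_one_left (z : K) (m : ℕ) :
    alternatingGeomSum 1 z (2 * m) = m * (z + z⁻¹) := by
  rw [alternatingGeomSum_two_mul]
  simp [mul_comm]

theorem alternatingGeomSum_neg_one_left (z : K) (m : ℕ) :
    alternatingGeomSum (-1) z (2 * m) = m * (z - z⁻¹) := by
  rw [alternatingGeomSum_two_mul]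
  simp [sub_eq_add_neg, mul_comm]

theorem alternatingGeomSum_eq_zero {w : K} {k : ℕ} (hk : Even k) (hwk : w ^ k = 1) (hw : w ≠ 1)
    (hw' : w ≠ -1) (z : K) : alternatingGeomSum w z k = 0 := by
  obtain ⟨m, rfl⟩ := hk.exists_two_nsmul
  rw [smul_eq_mul] at hwk ⊢
  have hsq : w ^ 2 ≠ 1 := fun h => (sq_eq_one_iff.mp h).elim hw hw'
  rw [alternatingGeomSum_two_mul, geom_sum_eq hsq, ← pow_mul, hwk, sub_self, zero_div, mul_zero]

end AlternatingGeomSum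

section ComplexExp

variable {k : ℕ} (θ : ℂ)

theorem alternatingGeomSum_one_exp (hk : Even k) :
    alternatingGeomSum 1 (exp (θ * I)) k = k * cos θ := by
  obtain ⟨m, rfl⟩ := hk.exists_two_nsmul
  rw [smul_eq_mul, alternatingGeomSum_one_left, ← exp_neg, ← neg_mul, ← two_cos]
  push_cast
  ring

theorem alternatingGeomSum_neg_one_exp (hk : Even k) :
    alternatingGeomSum (-1) (exp (θ * I)) k = I * k * sin θ := by
  obtain ⟨m, rfl⟩ := hk.exists_two_nsmul
  have hsub : exp (θ * I) - exp (-θ * I) = 2 * I * sin θ := by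
    linear_combination (-I) * two_sin θ + (exp (θ * I) - exp (-θ * I)) * I_sq
  rw [smul_eq_mul, alternatingGeomSum_neg_one_left, ← exp_neg, ← neg_mul, hsub]
  push_cast
  ring

end ComplexExp

theorem pow_eq_neg_one_iff_mod_eq_half {R : Type*} [CommRing R] [NoZeroDivisors R] {ζ : R}
    {k : ℕ} (hζ : IsPrimitiveRoot ζ k) (hk : Even k) (hk0 : k ≠ 0) (a : ℕ) :
    ζ ^ a = -1 ↔ a % k = k / 2 := by
  have hhalf : ζ ^ (k / 2) = -1 :=
    (hζ.pow hk0.pos (Nat.div_two_mul_two_of_even hk).symm).eq_neg_one_of_two_right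
  rw [← hhalf, (hζ.isOfFinOrder hk0).pow_inj_mod, ← hζ.eq_orderOf,
    Nat.mod_eq_of_lt (Nat.div_lt_self hk0.pos one_lt_two)]

/-- The element `j·n/k + (-1)ʲ` of `ℤ/nℤ`; for `j < k` these make up the set
`A = {jn/k + 1 : j even} ∪ {jn/k - 1 : j odd}`. -/
def alternatingTerm (n k j : ℕ) : ZMod n :=
  ((j * (n / k) : ℕ) : ZMod n) + (-1) ^ j

theorem addChar_alternatingTerm_mul {M : Type*} [DivisionCommMonoid M] {n : ℕ}
    (ψ : AddChar (ZMod n) M) (k j : ℕ) (x : ZMod n) :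
    ψ (alternatingTerm n k j * x) = ψ (((n / k : ℕ) : ZMod n) * x) ^ j * ψ x ^ ((-1 : ℤ) ^ j) := by
  rw [← AddChar.map_nsmul_eq_pow, ← AddChar.map_zsmul_eq_zpow, ← AddChar.map_add_eq_mul,
    alternatingTerm, nsmul_eq_mul, zsmul_eq_mul]
  push_cast
  ring_nf

section StdAddChar

variable {n k : ℕ} [NeZero n]

theorem e2_div_eq_stdAddChar (a : ℕ) : e2 ((a : ℝ) / n) = ZMod.stdAddChar (a : ZMod n) := by
  rw [← Int.cast_natCast (R := ZMod n) a, ZMod.stdAddChar_coe, e2]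
  push_cast
  ring_nf

theorem stdAddChar_natCast_eq_exp_mul_I (a : ℕ) :
    ZMod.stdAddChar (a : ZMod n) = exp ((2 * Real.pi * (a : ℝ) / n : ℝ) * I) := by
  rw [← e2_div_eq_stdAddChar, e2]
  push_cast
  ring_nf

theorem superchar_eq_finsum_stdAddChar (X : Set (ZMod n)) (y : ZMod n) :
    superchar n X y = ∑ᶠ x ∈ X, ZMod.stdAddChar (x * y) := by
  simp_rw [superchar, e2_div_eq_stdAddChar, Nat.cast_mul, ZMod.natCast_zmod_val]

theorem superchar_image_alternatingTerm_mul {r : ZMod n}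
    (hinj : Set.InjOn (fun j => alternatingTerm n k j * r) (Set.Iio k)) (y : ZMod n) :
    superchar n ((fun j => alternatingTerm n k j * r) '' Set.Iio k) y =
      alternatingGeomSum (ZMod.stdAddChar (((n / k : ℕ) : ZMod n) * r) ^ y.val)
        (ZMod.stdAddChar (r * y)) k := by
  have hw : ZMod.stdAddChar (((n / k : ℕ) : ZMod n) * r) ^ y.val =
      ZMod.stdAddChar (((n / k : ℕ) : ZMod n) * (r * y)) := by
    rw [← AddChar.map_nsmul_eq_pow, nsmul_eq_mul, ZMod.natCast_zmod_val]
    ring_nf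
  rw [superchar_eq_finsum_stdAddChar, finsum_mem_image hinj, ← Finset.coe_range,
    finsum_mem_coe_finset, hw, alternatingGeomSum]
  simp only [mul_assoc, addChar_alternatingTerm_mul]

theorem isPrimitiveRoot_stdAddChar_one : IsPrimitiveRoot (ZMod.stdAddChar (1 : ZMod n)) n := by
  have h := ZMod.stdAddChar_coe (N := n) 1
  rw [Int.cast_one, Int.cast_one, mul_one] at h
  exact h ▸ isPrimitiveRoot_exp n (NeZero.ne n)

theorem isPrimitiveRoot_stdAddChar_div_mul (hkn : k ∣ n) {r : ZMod n} (hr : r.val.Coprime k) :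
    IsPrimitiveRoot (ZMod.stdAddChar (((n / k : ℕ) : ZMod n) * r)) k := by
  have hpow : ZMod.stdAddChar (((n / k : ℕ) : ZMod n) * r) =
      (ZMod.stdAddChar (1 : ZMod n) ^ (n / k)) ^ r.val := by
    rw [← pow_mul, ← AddChar.map_nsmul_eq_pow, nsmul_one, Nat.cast_mul, ZMod.natCast_zmod_val]
  rw [hpow]
  exact (isPrimitiveRoot_stdAddChar_one.pow (NeZero.pos n)
    (Nat.div_mul_cancel hkn).symm).pow_of_coprime _ hr

end StdAddChar

theorem stmt12_general {n k : ℕ} [NeZero n] (hke : Even k) (hkn : k ∣ n) (r : ZMod n)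
    (hr : r.val.Coprime k)
    (hinj : Set.InjOn (fun j => alternatingTerm n k j * r) (Set.Iio k)) (y : ZMod n) :
    let X := (fun j => alternatingTerm n k j * r) '' Set.Iio k
    let θ : ℝ := 2 * Real.pi * ((r.val * y.val : ℕ) : ℝ) / n
    (k ∣ y.val → superchar n X y = k * (Real.cos θ : ℂ)) ∧
      (y.val % k = k / 2 → superchar n X y = I * k * (Real.sin θ : ℂ)) ∧
      (¬ k ∣ y.val → y.val % k ≠ k / 2 → superchar n X y = 0) := by
  intro X θ
  set ζ : ℂ := ZMod.stdAddChar (((n / k : ℕ) : ZMod n) * r)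
  have hζ : IsPrimitiveRoot ζ k := isPrimitiveRoot_stdAddChar_div_mul hkn hr
  have hneg := pow_eq_neg_one_iff_mod_eq_half hζ hke
    (ne_zero_of_dvd_ne_zero (NeZero.ne n) hkn) y.val
  have hz : ZMod.stdAddChar (r * y) = exp (θ * I) := by
    rw [← stdAddChar_natCast_eq_exp_mul_I, Nat.cast_mul, ZMod.natCast_zmod_val,
      ZMod.natCast_zmod_val]
  have hX : superchar n X y = alternatingGeomSum (ζ ^ y.val) (exp (θ * I)) k := by
    rw [← hz]
    exact superchar_image_alternatingTerm_mul hinj y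
  rw [hX, ofReal_cos, ofReal_sin]
  refine ⟨fun h => ?_, fun h => ?_, fun hdvd hhalf => ?_⟩
  · rw [(hζ.pow_eq_one_iff_dvd _).mpr h, alternatingGeomSum_one_exp _ hke]
  · rw [hneg.mpr h, alternatingGeomSum_neg_one_exp _ hke]
  · have hpow : (ζ ^ y.val) ^ k = 1 := by rw [pow_right_comm, hζ.pow_eq_one, one_pow]
    exact alternatingGeomSum_eq_zero hke hpow (mt (hζ.pow_eq_one_iff_dvd _).mp hdvd)
      (mt hneg.mp hhalf) _

theorem stmt12 (n k : ℕ) (hk2 : 2 < k) (hke : Even k) (hkn : k ∣ n) (hnk : 2 < n / k)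
    (r : (ZMod n)ˣ)
    (X : Set (ZMod n))
    (hX : X = (fun j : ℕ => (((j * (n / k) : ℕ) : ZMod n) + (-1 : ZMod n) ^ j) * (r : ZMod n))
      '' (Set.Iio k))
    (hdist : Set.InjOn
      (fun j : ℕ => (((j * (n / k) : ℕ) : ZMod n) + (-1 : ZMod n) ^ j) * (r : ZMod n))
      (Set.Iio k))
    (y : ZMod n) :
    (k ∣ y.val → superchar n X y
        = (k : ℂ) * ((Real.cos (2 * Real.pi * (((r : ZMod n).val * y.val : ℕ) : ℝ) / (n : ℝ)) : ℝ) : ℂ))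
    ∧ (y.val % k = k / 2 → superchar n X y
        = Complex.I * (k : ℂ) *
            ((Real.sin (2 * Real.pi * (((r : ZMod n).val * y.val : ℕ) : ℝ) / (n : ℝ)) : ℝ) : ℂ))
    ∧ (¬ k ∣ y.val → y.val % k ≠ k / 2 → superchar n X y = 0) := by
  have : NeZero n := ⟨by rintro rfl; simp at hnk⟩
  subst hX
  exact stmt12_general hke hkn r ((ZMod.val_coe_unit_coprime r).coprime_dvd_right hkn) hdist y
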